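/- arXiv:1611.00549 — 4 statements merged into one kernel-verified Lean document; each statement's English description precedes it below -/
import Mathlib

section
/- Theorem 1 (observed-variable form of the KL decomposition). For every parent assignment G, the conditional KL divergence of the factorized model from the observed joint distribution equals the stochastic interaction minus the sum of the collective transfer entropies into each node: D(G) = S − Σ_{i=1}^M T_i(G). -/
/-!
Where `P(Y' = y, W = w) > 0`, every conditional probability in the logarithm of `condKL` is
nonzero, because the events involved contain `{Y' = y, W = w}`. There the logarithm splits as
`log P(y | w) - ∑ i, log P(y_i | w_i, p_i(w))`; elsewhere the weight vanishes. The first term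
averages to `-H(Y' | W)`. The `i`-th term depends on `(y, w)` only through `(y_i, (w_i, p_i(w)))`, so
marginalizing (`sum_measure_fiber_mul_comp`) gives average `-H(Y'^i | W^i, P_i)`. Hence
`D(G) = -H(Y' | W) + ∑ i, H(Y'^i | W^i, P_i)` (`condKL_eq_neg_condEnt_add_sum`), and adding and
subtracting `∑ i, H(Y'^i | W^i)` gives the decomposition.
-/

open MeasureTheory Finset

/-- Conditional probability `P(X = x | Y = y)` computed from a measure. -/
noncomputable def cpr {Ω α β : Type*} [MeasurableSpace Ω] (μ : Measure Ω)
    (X : Ω → α) (Y : Ω → β) (x : α) (y : β) : ℝ :=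
  (μ {ω | X ω = x ∧ Y ω = y}).toReal / (μ {ω | Y ω = y}).toReal

/-- Conditional entropy `H(X | Y) = -∑ P(X=x, Y=y) log P(X=x | Y=y)`
(with the `0 · log 0 = 0` convention, automatic here since the coefficient vanishes). -/
noncomputable def condEnt {Ω α β : Type*} [MeasurableSpace Ω] (μ : Measure Ω)
    [Fintype α] [Fintype β] (X : Ω → α) (Y : Ω → β) : ℝ :=
  -∑ x : α, ∑ y : β, (μ {ω | X ω = x ∧ Y ω = y}).toReal * Real.log (cpr μ X Y x y)

/-- Collective transfer entropy into node `i` for the parent assignment `G`: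
`T_i(G) = H(Y'^i | W^i) − H(Y'^i | (W^i, P_i))` where `P_i = (W^j)_{j ∈ G i}`. -/
noncomputable def transEnt {Ω : Type*} [MeasurableSpace Ω] (μ : Measure Ω) {M : ℕ}
    {Yt Wt : Fin M → Type*} [∀ i, Fintype (Yt i)] [∀ i, Fintype (Wt i)]
    (Yv : ∀ i, Ω → Yt i) (Wv : ∀ i, Ω → Wt i)
    (G : Fin M → Finset (Fin M)) (i : Fin M) : ℝ :=
  condEnt μ (Yv i) (Wv i) -
    condEnt μ (Yv i) (fun ω => (Wv i ω, fun j : {j // j ∈ G i} => Wv j.1 ω))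

/-- Stochastic interaction `S = −H(Y' | W) + ∑ i, H(Y'^i | W^i)`. -/
noncomputable def stochInt {Ω : Type*} [MeasurableSpace Ω] (μ : Measure Ω) {M : ℕ}
    {Yt Wt : Fin M → Type*} [∀ i, Fintype (Yt i)] [∀ i, Fintype (Wt i)]
    (Yv : ∀ i, Ω → Yt i) (Wv : ∀ i, Ω → Wt i) : ℝ :=
  -condEnt μ (fun ω (i : Fin M) => Yv i ω) (fun ω (i : Fin M) => Wv i ω) +
    ∑ i, condEnt μ (Yv i) (Wv i)

/-- Conditional KL divergence of the factorized model determined by `G` from the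
observed joint distribution:
`D(G) = ∑_{y,w} P(Y'=y, W=w) · log [ P(Y'=y | W=w) / ∏ i, P(Y'^i=y_i | W^i=w_i, P_i=p_i(w)) ]`.
(Terms with `P(Y'=y, W=w) = 0` vanish, so the sum effectively ranges over the support.) -/
noncomputable def condKL {Ω : Type*} [MeasurableSpace Ω] (μ : Measure Ω) {M : ℕ}
    {Yt Wt : Fin M → Type*} [∀ i, Fintype (Yt i)] [∀ i, Fintype (Wt i)]
    (Yv : ∀ i, Ω → Yt i) (Wv : ∀ i, Ω → Wt i)
    (G : Fin M → Finset (Fin M)) : ℝ :=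
  ∑ y : ∀ i, Yt i, ∑ w : ∀ i, Wt i,
    (μ {ω | (fun i => Yv i ω) = y ∧ (fun i => Wv i ω) = w}).toReal *
      Real.log (cpr μ (fun ω (i : Fin M) => Yv i ω) (fun ω (i : Fin M) => Wv i ω) y w /
        ∏ i, cpr μ (Yv i) (fun ω => (Wv i ω, fun j : {j // j ∈ G i} => Wv j.1 ω))
          (y i) (w i, fun j : {j // j ∈ G i} => w j.1))

/-- Change of variables for a finitely-valued `Z`: the expectation of `f (g Z)` may be computed
from the law of `Z` or from the law of `g Z`. -/
lemma sum_measure_fiber_mul_comp {Ω γ α : Type*} [MeasurableSpace Ω] (μ : Measure Ω)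
    [IsFiniteMeasure μ] [Fintype γ] [Fintype α] (Z : Ω → γ)
    (hZ : ∀ z, MeasurableSet {ω | Z ω = z}) (g : γ → α) (f : α → ℝ) :
    ∑ z, (μ {ω | Z ω = z}).toReal * f (g z) =
      ∑ a, (μ {ω | g (Z ω) = a}).toReal * f a := by
  classical
  have key : ∀ a, (μ {ω | g (Z ω) = a}).toReal =
      ∑ z with g z = a, (μ {ω | Z ω = z}).toReal := by
    intro a
    have hset : {ω | g (Z ω) = a} = ⋃ z ∈ Finset.univ.filter (fun z => g z = a),
        {ω | Z ω = z} := by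
      ext ω; simp
    rw [hset, measure_biUnion_finset _ (fun z _ => hZ z),
      ENNReal.toReal_sum (fun z _ => measure_ne_top μ _)]
    intro z _ z' _ hne
    exact Set.disjoint_left.2 fun ω h h' => hne (h.symm.trans h')
  rw [← Finset.sum_fiberwise Finset.univ g]
  refine Finset.sum_congr rfl fun a _ => ?_
  rw [key, Finset.sum_mul]
  refine Finset.sum_congr rfl fun z hz => ?_
  rw [(Finset.mem_filter.1 hz).2]

lemma cpr_ne_zero {Ω α β : Type*} [MeasurableSpace Ω] (μ : Measure Ω) [IsFiniteMeasure μ]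
    (X : Ω → α) (Y : Ω → β) (x : α) (y : β) {s : Set Ω} (hs : (μ s).toReal ≠ 0)
    (hsub : s ⊆ {ω | X ω = x ∧ Y ω = y}) : cpr μ X Y x y ≠ 0 := by
  have hpos : 0 < (μ s).toReal := lt_of_le_of_ne ENNReal.toReal_nonneg hs.symm
  have mono : ∀ t, s ⊆ t → (μ t).toReal ≠ 0 := fun t ht =>
    (hpos.trans_le (ENNReal.toReal_mono (measure_ne_top μ t) (measure_mono ht))).ne'
  exact div_ne_zero (mono _ hsub) (mono _ fun ω h => (hsub h).2)

/-- The conditional entropy of functions of `Z`, as an expectation over the law of `Z`. -/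
lemma condEnt_comp {Ω γ α β : Type*} [MeasurableSpace Ω] (μ : Measure Ω)
    [IsFiniteMeasure μ] [Fintype γ] [Fintype α] [Fintype β] (Z : Ω → γ)
    (hZ : ∀ z, MeasurableSet {ω | Z ω = z}) (g : γ → α) (h : γ → β)
    (X : Ω → α) (Y : Ω → β) (hX : ∀ ω, X ω = g (Z ω)) (hY : ∀ ω, Y ω = h (Z ω)) :
    condEnt μ X Y =
      -∑ z, (μ {ω | Z ω = z}).toReal * Real.log (cpr μ X Y (g z) (h z)) := by
  rw [condEnt, sum_measure_fiber_mul_comp μ Z hZ (fun z => (g z, h z))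
    (fun a => Real.log (cpr μ X Y a.1 a.2)), Fintype.sum_prod_type]
  simp only [Prod.mk.injEq, hX, hY]

lemma condKL_eq_neg_condEnt_add_sum {Ω : Type*} [MeasurableSpace Ω] (μ : Measure Ω)
    [IsFiniteMeasure μ] {M : ℕ} (Yt Wt : Fin M → Type*)
    [∀ i, Fintype (Yt i)] [∀ i, Fintype (Wt i)]
    (Yv : ∀ i, Ω → Yt i) (Wv : ∀ i, Ω → Wt i)
    (hYm : ∀ i (a : Yt i), MeasurableSet {ω | Yv i ω = a})
    (hWm : ∀ i (b : Wt i), MeasurableSet {ω | Wv i ω = b})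
    (G : Fin M → Finset (Fin M)) :
    condKL μ Yv Wv G =
      -condEnt μ (fun ω (i : Fin M) => Yv i ω) (fun ω (i : Fin M) => Wv i ω) +
        ∑ i, condEnt μ (Yv i) (fun ω => (Wv i ω, fun j : {j // j ∈ G i} => Wv j.1 ω)) := by
  let Z : Ω → (∀ i, Yt i) × (∀ i, Wt i) := fun ω => (fun i => Yv i ω, fun i => Wv i ω)
  have hZ : ∀ z, MeasurableSet {ω | Z ω = z} := by
    rintro ⟨y, w⟩
    have : {ω | Z ω = (y, w)} =
        (⋂ i, {ω | Yv i ω = y i}) ∩ ⋂ i, {ω | Wv i ω = w i} := by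
      ext ω; simp [Z, funext_iff]
    rw [this]
    exact (MeasurableSet.iInter fun i => hYm i _).inter (MeasurableSet.iInter fun i => hWm i _)
  rw [condEnt_comp μ Z hZ Prod.fst Prod.snd _ _ (fun _ => rfl) (fun _ => rfl), neg_neg,
    Finset.sum_congr rfl fun i _ => condEnt_comp μ Z hZ (fun z => z.1 i)
      (fun z => (z.2 i, fun j : {j // j ∈ G i} => z.2 j.1)) _ _ (fun _ => rfl) (fun _ => rfl),
    Finset.sum_neg_distrib, Finset.sum_comm, ← sub_eq_add_neg, ← Finset.sum_sub_distrib,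
    condKL, ← Fintype.sum_prod_type']
  refine Finset.sum_congr rfl fun z _ => ?_
  have hset : {ω | (fun i => Yv i ω) = z.1 ∧ (fun i => Wv i ω) = z.2} = {ω | Z ω = z} := by
    ext ω; simp [Z, Prod.ext_iff]
  rw [hset, ← Finset.mul_sum, ← mul_sub]
  by_cases h0 : (μ {ω | Z ω = z}).toReal = 0
  · rw [h0, zero_mul, zero_mul]
  have hi : ∀ i ∈ Finset.univ,
      cpr μ (Yv i) (fun ω => (Wv i ω, fun j : {j // j ∈ G i} => Wv j.1 ω))
        (z.1 i) (z.2 i, fun j : {j // j ∈ G i} => z.2 j.1) ≠ 0 := fun i _ =>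
    cpr_ne_zero μ _ _ _ _ h0 (by rintro ω rfl; exact ⟨rfl, rfl⟩)
  rw [Real.log_div (cpr_ne_zero μ _ _ _ _ h0 (by rintro ω rfl; exact ⟨rfl, rfl⟩))
    (Finset.prod_ne_zero_iff.2 hi), Real.log_prod hi]

/-- **Theorem 1 (observed-variable form of the KL decomposition).**
For every parent assignment `G`, the conditional KL divergence of the factorized model
from the observed joint distribution equals the stochastic interaction minus the sum of
the collective transfer entropies into each node: `D(G) = S − ∑ i, T_i(G)`. -/
theorem condKL_eq_stochInt_sub_sum_transEnt {Ω : Type*} [MeasurableSpace Ω] (μ : Measure Ω) [IsProbabilityMeasure μ]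
    {M : ℕ} (hM : 1 ≤ M)
    (Yt Wt : Fin M → Type*)
    [∀ i, Fintype (Yt i)] [∀ i, Nonempty (Yt i)]
    [∀ i, Fintype (Wt i)] [∀ i, Nonempty (Wt i)]
    (Yv : ∀ i, Ω → Yt i) (Wv : ∀ i, Ω → Wt i)
    (hYm : ∀ i (a : Yt i), MeasurableSet {ω | Yv i ω = a})
    (hWm : ∀ i (b : Wt i), MeasurableSet {ω | Wv i ω = b})
    (G : Fin M → Finset (Fin M)) (hG : ∀ i, i ∉ G i) :
    condKL μ Yv Wv G = stochInt μ Yv Wv - ∑ i, transEnt μ Yv Wv G i := by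
  rw [condKL_eq_neg_condEnt_add_sum μ Yt Wt Yv Wv hYm hWm G]
  simp only [stochInt, transEnt, Finset.sum_sub_distrib]
  ring
end

section
/- Corollary 1 (minimum KL divergence equals maximum transfer entropy). Let 𝒢 be any finite nonempty collection of parent assignments. A parent assignment G* ∈ 𝒢 satisfies D(G*) ≤ D(G) for all G ∈ 𝒢 if and only if Σ_{i=1}^M T_i(G*) ≥ Σ_{i=1}^M T_i(G) for all G ∈ 𝒢; i.e., the minimizers of the conditional KL divergence over 𝒢 are exactly the maximizers of the total collective transfer entropy over 𝒢. -/
/-!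
Taking the logarithm of the quotient in `D(G)` on the support of `(Y', W)`, where every
conditional probability involved is positive, and marginalizing each resulting term gives
`D(G) = -H(Y' | W) + ∑ i, H(Y'^i | W^i, P_i)` (`condKL_eq`). Since
`∑ i, T_i(G) = ∑ i, H(Y'^i | W^i) - ∑ i, H(Y'^i | W^i, P_i)`, the sum `D(G) + ∑ i, T_i(G)` is the
stochastic interaction, which does not depend on `G` (`condKL_add_sum_transEnt`). Hence minimizing
`D` is the same as maximizing the total transfer entropy.
-/

open MeasureTheory Finset

/-- Change of variables for expectations of finitely-valued random variables:
the expectation of `g` under the law of `f ∘ Z` is that of `g ∘ f` under the law of `Z`. -/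
lemma sum_law_comp {Ω γ δ : Type*} [MeasurableSpace Ω] (μ : Measure Ω) [IsFiniteMeasure μ]
    [Fintype γ] [Fintype δ] (Z : Ω → γ) (hZ : ∀ c, MeasurableSet {ω | Z ω = c})
    (f : γ → δ) (g : δ → ℝ) :
    ∑ d, (μ {ω | f (Z ω) = d}).toReal * g d = ∑ c, (μ {ω | Z ω = c}).toReal * g (f c) := by
  classical
  have key : ∀ d, (μ {ω | f (Z ω) = d}).toReal =
      ∑ c with f c = d, (μ {ω | Z ω = c}).toReal := by
    intro d
    have hU : {ω | f (Z ω) = d} =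
        ⋃ c ∈ (Finset.univ.filter fun c => f c = d), {ω | Z ω = c} := by
      ext ω
      simp
    rw [hU, measure_biUnion_finset _ fun c _ => hZ c,
      ENNReal.toReal_sum fun c _ => measure_ne_top _ _]
    intro a _ b _ hab
    exact Set.disjoint_left.2 fun ω h1 h2 => hab (h1.symm.trans h2)
  rw [← Finset.sum_fiberwise (s := Finset.univ) (g := f)]
  refine Finset.sum_congr rfl fun d _ => ?_
  rw [key, Finset.sum_mul]
  refine Finset.sum_congr rfl fun c hc => ?_
  rw [(Finset.mem_filter.1 hc).2]

/-- A conditional entropy of images of `A` and `B` as a sum over the joint law of `(A, B)`. -/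
lemma condEnt_comp_s3 {Ω α β α' β' : Type*} [MeasurableSpace Ω] (μ : Measure Ω) [IsFiniteMeasure μ]
    [Fintype α] [Fintype β] [Fintype α'] [Fintype β'] (A : Ω → α) (B : Ω → β)
    (hA : ∀ a, MeasurableSet {ω | A ω = a}) (hB : ∀ b, MeasurableSet {ω | B ω = b})
    (f : α → α') (h : β → β') :
    condEnt μ (fun ω => f (A ω)) (fun ω => h (B ω)) =
      -∑ a, ∑ b, (μ {ω | A ω = a ∧ B ω = b}).toReal *
        Real.log (cpr μ (fun ω => f (A ω)) (fun ω => h (B ω)) (f a) (h b)) := by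
  have hZ : ∀ c : α × β, MeasurableSet {ω | (A ω, B ω) = c} := by
    rintro ⟨a, b⟩
    simp only [Prod.mk.injEq]
    exact (hA a).inter (hB b)
  have := sum_law_comp μ (fun ω => (A ω, B ω)) hZ (fun c => (f c.1, h c.2))
    (fun d => Real.log (cpr μ (fun ω => f (A ω)) (fun ω => h (B ω)) d.1 d.2))
  simp only [Fintype.sum_prod_type, Prod.mk.injEq] at this
  rw [condEnt, this]

/-- Conditional probabilities of images are nonzero at points of the support of `(A, B)`. -/
lemma cpr_comp_ne_zero {Ω α β α' β' : Type*} [MeasurableSpace Ω] (μ : Measure Ω)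
    [IsFiniteMeasure μ] (A : Ω → α) (B : Ω → β) (f : α → α') (h : β → β') (a : α) (b : β)
    (hab : (μ {ω | A ω = a ∧ B ω = b}).toReal ≠ 0) :
    cpr μ (fun ω => f (A ω)) (fun ω => h (B ω)) (f a) (h b) ≠ 0 := by
  have mono : ∀ s : Set Ω, {ω | A ω = a ∧ B ω = b} ⊆ s → (μ s).toReal ≠ 0 := by
    intro s hs h0
    have h1 : (μ {ω | A ω = a ∧ B ω = b}).toReal ≤ (μ s).toReal :=
      ENNReal.toReal_mono (measure_ne_top _ _) (measure_mono hs)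
    exact hab (le_antisymm (h0 ▸ h1) ENNReal.toReal_nonneg)
  refine div_ne_zero (mono _ ?_) (mono _ ?_)
  · rintro ω ⟨rfl, rfl⟩
    exact ⟨rfl, rfl⟩
  · rintro ω ⟨rfl, rfl⟩
    rfl

lemma measurableSet_pi_eq {Ω : Type*} [MeasurableSpace Ω] {M : ℕ} {T : Fin M → Type*}
    (X : ∀ i, Ω → T i) (hX : ∀ i a, MeasurableSet {ω | X i ω = a}) (x : ∀ i, T i) :
    MeasurableSet {ω | (fun i => X i ω) = x} := by
  simp only [funext_iff, Set.ofPred_forall]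
  exact MeasurableSet.iInter fun i => hX i (x i)

section

variable {Ω : Type*} [MeasurableSpace Ω] (μ : Measure Ω) [IsFiniteMeasure μ] {M : ℕ}
  {Yt Wt : Fin M → Type*} [∀ i, Fintype (Yt i)] [∀ i, Fintype (Wt i)]
  (Yv : ∀ i, Ω → Yt i) (Wv : ∀ i, Ω → Wt i)
  (hYm : ∀ i (a : Yt i), MeasurableSet {ω | Yv i ω = a})
  (hWm : ∀ i (b : Wt i), MeasurableSet {ω | Wv i ω = b})
  (G : Fin M → Finset (Fin M))

include hYm hWm

/-- The divergence is `D(G) = -H(Y' | W) + ∑ i, H(Y'^i | W^i, P_i)`. -/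
lemma condKL_eq :
    condKL μ Yv Wv G =
      -condEnt μ (fun ω (i : Fin M) => Yv i ω) (fun ω (i : Fin M) => Wv i ω) +
        ∑ i, condEnt μ (Yv i) (fun ω => (Wv i ω, fun j : {j // j ∈ G i} => Wv j.1 ω)) := by
  have hent : ∀ i, condEnt μ (Yv i) (fun ω => (Wv i ω, fun j : {j // j ∈ G i} => Wv j.1 ω)) =
      -∑ y : ∀ i, Yt i, ∑ w : ∀ i, Wt i,
        (μ {ω | (fun i => Yv i ω) = y ∧ (fun i => Wv i ω) = w}).toReal *
          Real.log (cpr μ (Yv i) (fun ω => (Wv i ω, fun j : {j // j ∈ G i} => Wv j.1 ω))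
            (y i) (w i, fun j : {j // j ∈ G i} => w j.1)) := fun i =>
    condEnt_comp_s3 μ (fun ω i => Yv i ω) (fun ω i => Wv i ω)
      (measurableSet_pi_eq Yv hYm) (measurableSet_pi_eq Wv hWm)
      (fun y => y i) (fun w => (w i, fun j : {j // j ∈ G i} => w j.1))
  simp only [hent]
  rw [condEnt, condKL, neg_neg, Finset.sum_neg_distrib, ← sub_eq_add_neg,
    Finset.sum_comm (s := (Finset.univ : Finset (Fin M))),
    ← Finset.sum_sub_distrib]
  refine Finset.sum_congr rfl fun y _ => ?_
  rw [Finset.sum_comm (s := (Finset.univ : Finset (Fin M))),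
    ← Finset.sum_sub_distrib]
  refine Finset.sum_congr rfl fun w _ => ?_
  rw [← Finset.mul_sum, ← mul_sub]
  by_cases h0 : (μ {ω | (fun i => Yv i ω) = y ∧ (fun i => Wv i ω) = w}).toReal = 0
  · rw [h0, zero_mul, zero_mul]
  have hfac : ∀ i, cpr μ (Yv i) (fun ω => (Wv i ω, fun j : {j // j ∈ G i} => Wv j.1 ω))
      (y i) (w i, fun j : {j // j ∈ G i} => w j.1) ≠ 0 := fun i =>
    cpr_comp_ne_zero μ (fun ω i => Yv i ω) (fun ω i => Wv i ω)
      (fun y => y i) (fun w => (w i, fun j : {j // j ∈ G i} => w j.1)) y w h0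
  have hnum : cpr μ (fun ω i => Yv i ω) (fun ω i => Wv i ω) y w ≠ 0 :=
    cpr_comp_ne_zero μ (fun ω i => Yv i ω) (fun ω i => Wv i ω) id id y w h0
  rw [Real.log_div hnum (Finset.prod_ne_zero_iff.2 fun i _ => hfac i), Real.log_prod fun i _ => hfac i]

/-- Divergence and total transfer entropy add up to a constant independent of `G`. -/
lemma condKL_add_sum_transEnt :
    condKL μ Yv Wv G + ∑ i, transEnt μ Yv Wv G i = stochInt μ Yv Wv := by
  simp only [condKL_eq μ Yv Wv hYm hWm, transEnt, stochInt, Finset.sum_sub_distrib]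
  ring

end

/-- **Corollary 1 (minimum KL divergence equals maximum transfer entropy).**
Over any finite nonempty collection `𝒢` of parent assignments, `G*` minimizes the
conditional KL divergence iff it maximizes the total collective transfer entropy. -/
theorem argmin_condKL_iff_argmax_transEnt {Ω : Type*} [MeasurableSpace Ω] (μ : Measure Ω) [IsProbabilityMeasure μ]
    {M : ℕ} (hM : 1 ≤ M)
    (Yt Wt : Fin M → Type*)
    [∀ i, Fintype (Yt i)] [∀ i, Nonempty (Yt i)]
    [∀ i, Fintype (Wt i)] [∀ i, Nonempty (Wt i)]
    (Yv : ∀ i, Ω → Yt i) (Wv : ∀ i, Ω → Wt i)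
    (hYm : ∀ i (a : Yt i), MeasurableSet {ω | Yv i ω = a})
    (hWm : ∀ i (b : Wt i), MeasurableSet {ω | Wv i ω = b})
    (𝒢 : Finset (Fin M → Finset (Fin M))) (h𝒢 : 𝒢.Nonempty)
    (h𝒢valid : ∀ G ∈ 𝒢, ∀ i, i ∉ G i)
    (Gstar : Fin M → Finset (Fin M)) (hGstar : Gstar ∈ 𝒢) :
    (∀ G ∈ 𝒢, condKL μ Yv Wv Gstar ≤ condKL μ Yv Wv G) ↔
      (∀ G ∈ 𝒢, ∑ i, transEnt μ Yv Wv G i ≤ ∑ i, transEnt μ Yv Wv Gstar i) := by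
  have h := condKL_add_sum_transEnt μ Yv Wv hYm hWm
  refine forall₂_congr fun G _ => ?_
  have h1 := h G
  have h2 := h Gstar
  constructor <;> intro h3 <;> linarith
end

section
/- Nonnegativity of the conditional KL divergence of the factorized model. For every parent assignment G, D(G) ≥ 0; equivalently, H(Y' | W) ≤ Σ_{i=1}^M H(Y'^i | (W^i, P_i)). -/
/-!
The divergence is a genuine relative entropy: compare `p (y, w) = P(Y' = y, W = w)` with
`Q (y, w) = P(W = w) * ∏ i, P(Y'^i = y i | W^i = w i, P_i = p_i w)`. Since `∑ y, ∏ i` factors as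
`∏ i, ∑ a` and each conditional law has total mass at most one (`sum_cpr_le_one`), `Q` has total
mass at most one. Gibbs' inequality, in the termwise form `p - Q ≤ p * log (p / Q)`
(`sub_le_mul_log`), then gives `0 ≤ D(G)`.

The entropy inequality is the same statement, because
`D(G) = -H(Y' | W) + ∑ i, H(Y'^i | (W^i, P_i))`: on the support of `p` all conditional
probabilities are positive, so the logarithm of the quotient splits, and the resulting expectations
of functions of `(Y'^i, W^i, P_i)` under the law of `(Y', W)` are computed under the marginal law
(`sum_fiber_mul`, `condEnt_eq_sum`).
-/

open MeasureTheory Finset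

theorem measurableSet_pi_fiber {Ω ι : Type*} [MeasurableSpace Ω] [Fintype ι] {A : ι → Type*}
    (X : ∀ i, Ω → A i) (hX : ∀ i (a : A i), MeasurableSet {ω | X i ω = a}) (x : ∀ i, A i) :
    MeasurableSet {ω | (fun i => X i ω) = x} := by
  have : {ω | (fun i => X i ω) = x} = ⋂ i, {ω | X i ω = x i} := by
    ext ω; simp [funext_iff]
  rw [this]
  exact MeasurableSet.iInter fun i => hX i (x i)

theorem sum_toReal_fiber_and {Ω α : Type*} [MeasurableSpace Ω] (μ : Measure Ω) [IsFiniteMeasure μ]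
    [Fintype α] (X : Ω → α) (hX : ∀ a, MeasurableSet {ω | X ω = a})
    {S : Ω → Prop} (hS : MeasurableSet {ω | S ω}) :
    ∑ a, (μ {ω | X ω = a ∧ S ω}).toReal = (μ {ω | S ω}).toReal := by
  have h : {ω | S ω} = ⋃ a ∈ (Finset.univ : Finset α), {ω | X ω = a ∧ S ω} := by
    ext ω; simp
  have h2 := measureReal_biUnion_finset (μ := μ) (s := (Finset.univ : Finset α))
    (f := fun a => {ω | X ω = a ∧ S ω})
    (by
      intro a _ b _ hab
      refine Set.disjoint_left.2 fun ω h1 h2 => hab ?_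
      exact h1.1.symm.trans h2.1)
    (fun a _ => (hX a).inter hS)
  rw [← h] at h2
  exact h2.symm

theorem cpr_nonneg {Ω α β : Type*} [MeasurableSpace Ω] (μ : Measure Ω)
    (X : Ω → α) (Y : Ω → β) (x : α) (y : β) : 0 ≤ cpr μ X Y x y := by
  unfold cpr; positivity

theorem cpr_pos {Ω α β : Type*} [MeasurableSpace Ω] (μ : Measure Ω) [IsFiniteMeasure μ]
    (X : Ω → α) (Y : Ω → β) (x : α) (y : β) (S : Set Ω) (hS : 0 < (μ S).toReal)
    (hsub : ∀ ω ∈ S, X ω = x ∧ Y ω = y) : 0 < cpr μ X Y x y :=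
  div_pos
    (hS.trans_le (measureReal_mono (μ := μ) (s₂ := {ω | X ω = x ∧ Y ω = y}) fun ω h => hsub ω h))
    (hS.trans_le (measureReal_mono (μ := μ) (s₂ := {ω | Y ω = y}) fun ω h => (hsub ω h).2))

/-- Only `≤` holds in general: when `P(Y = y) = 0` the junk value of the division makes the
sum vanish. -/
theorem sum_cpr_le_one {Ω α β : Type*} [MeasurableSpace Ω] (μ : Measure Ω) [IsFiniteMeasure μ]
    [Fintype α] (X : Ω → α) (Y : Ω → β) (hX : ∀ a, MeasurableSet {ω | X ω = a})
    (y : β) (hY : MeasurableSet {ω | Y ω = y}) : ∑ x, cpr μ X Y x y ≤ 1 := by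
  unfold cpr
  rw [← Finset.sum_div, sum_toReal_fiber_and μ X hX hY]
  exact div_self_le_one _

/-- Change of variables: the expectation of `g (f Z)` may be computed under the law of `f Z` or
under the law of `Z`. -/
theorem sum_fiber_mul {Ω γ δ : Type*} [MeasurableSpace Ω] (μ : Measure Ω) [IsFiniteMeasure μ]
    [Fintype γ] [Fintype δ] (Z : Ω → γ) (hZ : ∀ z, MeasurableSet {ω | Z ω = z})
    (f : γ → δ) (hf : ∀ d, MeasurableSet {ω | f (Z ω) = d}) (g : δ → ℝ) :
    ∑ d, (μ {ω | f (Z ω) = d}).toReal * g d = ∑ z, (μ {ω | Z ω = z}).toReal * g (f z) := by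
  classical
  have h : ∀ d, (μ {ω | f (Z ω) = d}).toReal * g d =
      ∑ z, if f z = d then (μ {ω | Z ω = z}).toReal * g d else 0 := by
    intro d
    rw [← sum_toReal_fiber_and μ Z hZ (hf d), Finset.sum_mul]
    refine Finset.sum_congr rfl fun z _ => ?_
    split_ifs with hz
    · congr 4
      ext ω
      exact ⟨fun h => h.1, fun h => ⟨h, by rw [h, hz]⟩⟩
    · have : {ω | Z ω = z ∧ f (Z ω) = d} = ∅ := by
        ext ω
        simp only [Set.mem_ofPred_eq, Set.mem_empty_iff_false, iff_false]
        rintro ⟨h1, h2⟩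
        exact hz (h1 ▸ h2)
      simp [this]
  simp_rw [h]
  rw [Finset.sum_comm]
  simp

/-- The conditional entropy `H(f(Y) | g(W))`, written as an expectation under the joint law of
`(Y, W)` instead of that of `(f(Y), g(W))`. -/
theorem condEnt_eq_sum {Ω α β γ δ : Type*} [MeasurableSpace Ω] (μ : Measure Ω) [IsFiniteMeasure μ]
    [Fintype α] [Fintype β] [Fintype γ] [Fintype δ]
    (Y : Ω → α) (W : Ω → β) (hY : ∀ a, MeasurableSet {ω | Y ω = a})
    (hW : ∀ b, MeasurableSet {ω | W ω = b}) (f : α → γ) (g : β → δ)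
    (hf : ∀ c, MeasurableSet {ω | f (Y ω) = c}) (hg : ∀ d, MeasurableSet {ω | g (W ω) = d}) :
    condEnt μ (fun ω => f (Y ω)) (fun ω => g (W ω)) =
      -∑ y, ∑ w, (μ {ω | Y ω = y ∧ W ω = w}).toReal *
        Real.log (cpr μ (fun ω => f (Y ω)) (fun ω => g (W ω)) (f y) (g w)) := by
  have key := sum_fiber_mul μ (fun ω => (Y ω, W ω))
    (fun z => by
      simp only [Prod.ext_iff]
      exact (hY z.1).inter (hW z.2))
    (fun z => (f z.1, g z.2))
    (fun d => by
      simp only [Prod.ext_iff]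
      exact (hf d.1).inter (hg d.2))
    (fun d => Real.log (cpr μ (fun ω => f (Y ω)) (fun ω => g (W ω)) d.1 d.2))
  simp only [Fintype.sum_prod_type, Prod.mk.injEq] at key
  unfold condEnt
  rw [key]

/-- Termwise Gibbs inequality for `p = P(y, w)`, `q = P(w)` and a model conditional
probability `c`. -/
theorem sub_le_mul_log {p q c : ℝ} (hp : 0 ≤ p) (hq : 0 ≤ q) (hc : 0 ≤ c)
    (h : 0 < p → 0 < q ∧ 0 < c) : p - q * c ≤ p * Real.log (p / q / c) := by
  rcases hp.eq_or_lt with rfl | hp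
  · simpa using mul_nonneg hq hc
  · obtain ⟨hq, hc⟩ := h hp
    have h1 := Real.one_sub_inv_le_log_of_pos (x := p / q / c) (by positivity)
    have h2 := mul_le_mul_of_nonneg_left h1 hp.le
    have h3 : p * (1 - (p / q / c)⁻¹) = p - q * c := by field_simp
    linarith

/-- **Nonnegativity of the conditional KL divergence of the factorized model.**
For every parent assignment `G`, `D(G) ≥ 0`; equivalently,
`H(Y' | W) ≤ ∑ i, H(Y'^i | (W^i, P_i))`. -/
theorem condKL_nonneg {Ω : Type*} [MeasurableSpace Ω] (μ : Measure Ω) [IsProbabilityMeasure μ]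
    {M : ℕ} (hM : 1 ≤ M)
    (Yt Wt : Fin M → Type*)
    [∀ i, Fintype (Yt i)] [∀ i, Nonempty (Yt i)]
    [∀ i, Fintype (Wt i)] [∀ i, Nonempty (Wt i)]
    (Yv : ∀ i, Ω → Yt i) (Wv : ∀ i, Ω → Wt i)
    (hYm : ∀ i (a : Yt i), MeasurableSet {ω | Yv i ω = a})
    (hWm : ∀ i (b : Wt i), MeasurableSet {ω | Wv i ω = b})
    (G : Fin M → Finset (Fin M)) (hG : ∀ i, i ∉ G i) :
    0 ≤ condKL μ Yv Wv G ∧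
      condEnt μ (fun ω (i : Fin M) => Yv i ω) (fun ω (i : Fin M) => Wv i ω) ≤
        ∑ i, condEnt μ (Yv i)
          (fun ω => (Wv i ω, fun j : {j // j ∈ G i} => Wv j.1 ω)) := by
  have hY := measurableSet_pi_fiber Yv hYm
  have hW := measurableSet_pi_fiber Wv hWm
  have hV : ∀ i (v : Wt i × (∀ j : {j // j ∈ G i}, Wt j.1)),
      MeasurableSet {ω | (Wv i ω, fun j : {j // j ∈ G i} => Wv j.1 ω) = v} := by
    intro i v
    simp only [Prod.ext_iff]
    exact (hWm i v.1).inter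
      (measurableSet_pi_fiber (fun j : {j // j ∈ G i} => Wv j.1) (fun j => hWm j.1) v.2)
  have hpos : ∀ (y : ∀ i, Yt i) (w : ∀ i, Wt i),
      0 < (μ {ω | (fun i => Yv i ω) = y ∧ (fun i => Wv i ω) = w}).toReal → ∀ i,
      0 < cpr μ (Yv i) (fun ω => (Wv i ω, fun j : {j // j ∈ G i} => Wv j.1 ω))
          (y i) (w i, fun j : {j // j ∈ G i} => w j.1) := by
    intro y w h i
    refine cpr_pos μ _ _ _ _ _ h ?_
    rintro ω ⟨rfl, rfl⟩
    exact ⟨rfl, rfl⟩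
  have hposW : ∀ (y : ∀ i, Yt i) (w : ∀ i, Wt i),
      0 < (μ {ω | (fun i => Yv i ω) = y ∧ (fun i => Wv i ω) = w}).toReal →
      0 < (μ {ω | (fun i => Wv i ω) = w}).toReal := fun y w h =>
    h.trans_le (measureReal_mono (μ := μ) (s₂ := {ω | (fun i => Wv i ω) = w}) fun ω hω => hω.2)
  have hsumW : ∑ w, (μ {ω | (fun i => Wv i ω) = w}).toReal = 1 := by
    have := sum_toReal_fiber_and μ (fun ω i => Wv i ω) hW (S := fun _ => True)
      MeasurableSet.univ
    simpa using this
  have hD : 0 ≤ condKL μ Yv Wv G := by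
    have hp : ∑ y : ∀ i, Yt i, ∑ w : ∀ i, Wt i,
        (μ {ω | (fun i => Yv i ω) = y ∧ (fun i => Wv i ω) = w}).toReal = 1 := by
      rw [Finset.sum_comm, ← hsumW]
      exact Finset.sum_congr rfl fun w _ => sum_toReal_fiber_and μ _ hY (hW w)
    have hQ : ∑ y : ∀ i, Yt i, ∑ w : ∀ i, Wt i, (μ {ω | (fun i => Wv i ω) = w}).toReal *
        ∏ i, cpr μ (Yv i) (fun ω => (Wv i ω, fun j : {j // j ∈ G i} => Wv j.1 ω))
          (y i) (w i, fun j : {j // j ∈ G i} => w j.1) ≤ 1 := by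
      rw [Finset.sum_comm, ← hsumW]
      refine Finset.sum_le_sum fun w _ => ?_
      rw [← Finset.mul_sum]
      refine mul_le_of_le_one_right ENNReal.toReal_nonneg ?_
      rw [← Fintype.prod_sum (fun i a => cpr μ (Yv i)
        (fun ω => (Wv i ω, fun j : {j // j ∈ G i} => Wv j.1 ω))
          a (w i, fun j : {j // j ∈ G i} => w j.1))]
      exact Finset.prod_le_one (fun i _ => Finset.sum_nonneg fun a _ => cpr_nonneg _ _ _ _ _)
        (fun i _ => sum_cpr_le_one μ _ _ (hYm i) _ (hV i _))
    calc (0 : ℝ) ≤ ∑ y : ∀ i, Yt i, ∑ w : ∀ i, Wt i,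
          ((μ {ω | (fun i => Yv i ω) = y ∧ (fun i => Wv i ω) = w}).toReal -
            (μ {ω | (fun i => Wv i ω) = w}).toReal *
            ∏ i, cpr μ (Yv i) (fun ω => (Wv i ω, fun j : {j // j ∈ G i} => Wv j.1 ω))
              (y i) (w i, fun j : {j // j ∈ G i} => w j.1)) := by
          simp only [Finset.sum_sub_distrib]
          linarith
      _ ≤ condKL μ Yv Wv G :=
          Finset.sum_le_sum fun y _ => Finset.sum_le_sum fun w _ =>
            sub_le_mul_log ENNReal.toReal_nonneg ENNReal.toReal_nonneg
              (Finset.prod_nonneg fun i _ => cpr_nonneg _ _ _ _ _)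
              fun h => ⟨hposW y w h, Finset.prod_pos fun i _ => hpos y w h i⟩
  refine ⟨hD, ?_⟩
  have hE : ∀ i, condEnt μ (Yv i) (fun ω => (Wv i ω, fun j : {j // j ∈ G i} => Wv j.1 ω)) =
      -∑ y : ∀ i, Yt i, ∑ w : ∀ i, Wt i,
        (μ {ω | (fun i => Yv i ω) = y ∧ (fun i => Wv i ω) = w}).toReal *
        Real.log (cpr μ (Yv i) (fun ω => (Wv i ω, fun j : {j // j ∈ G i} => Wv j.1 ω))
          (y i) (w i, fun j : {j // j ∈ G i} => w j.1)) := fun i =>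
    condEnt_eq_sum μ (fun ω i => Yv i ω) (fun ω i => Wv i ω) hY hW (fun y => y i)
      (fun w => (w i, fun j : {j // j ∈ G i} => w j.1)) (hYm i) (hV i)
  have hDE : condKL μ Yv Wv G =
      -condEnt μ (fun ω (i : Fin M) => Yv i ω) (fun ω (i : Fin M) => Wv i ω) +
        ∑ i, condEnt μ (Yv i) (fun ω => (Wv i ω, fun j : {j // j ∈ G i} => Wv j.1 ω)) := by
    simp_rw [hE]
    rw [Finset.sum_neg_distrib, Finset.sum_comm]
    unfold condKL condEnt
    rw [neg_neg, ← sub_eq_add_neg, ← Finset.sum_sub_distrib]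
    refine Finset.sum_congr rfl fun y _ => ?_
    rw [Finset.sum_comm, ← Finset.sum_sub_distrib]
    refine Finset.sum_congr rfl fun w _ => ?_
    rw [← Finset.mul_sum, ← mul_sub]
    -- Off the support of the joint law both sides vanish; on it every logarithm is of a
    -- positive number.
    rcases (ENNReal.toReal_nonneg (a := μ {ω | (fun i => Yv i ω) = y ∧
      (fun i => Wv i ω) = w})).eq_or_lt with h | h
    · rw [← h, zero_mul, zero_mul]
    · have hne := fun i => (hpos y w h i).ne'
      rw [Real.log_div (cpr_pos μ _ _ _ _ _ h fun ω hω => hω).ne'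
        (Finset.prod_ne_zero_iff.2 fun i _ => hne i), Real.log_prod fun i _ => hne i]
  linarith
end

section
/- Probabilistic core of Lemma 1 (factorization of the observed conditional over subsystems). Let M ≥ 1 and let E = (E_1, …, E_M) be a tuple of finitely-valued random variables (E_i the delay-window of subsystem i's and its parents' observations). For each i, let U^i (the latent tuple consisting of subsystem i's state and its parents' states), X'^i (subsystem i's next latent state), and Y'^i (subsystem i's next observation) be finitely-valued random variables. Assume for each i: (i) exact local reconstruction, i.e., there is a function φ^i with U^i = φ^i(E_i) almost surely; (ii) X'^i is conditionally independent of E given U^i; (iii) Y'^i is conditionally independent of the pair (U^i, E) given X'^i; and assume (iv) the pairs (X'^1, Y'^1), …, (X'^M, Y'^M) are mutually conditionally independent given E. Then for every e = (e_1, …, e_M) with P(E=e) > 0 and every y = (y_1, …, y_M): P(Y'^1=y_1, …, Y'^M=y_M | E=e) = ∏_{i=1}^M P(Y'^i=y_i | E_i=e_i), and each factor satisfies P(Y'^i=y_i | E_i=e_i) = Σ_{x'} P(X'^i=x' | U^i=φ^i(e_i)) · P(Y'^i=y_i | X'^i=x'). -/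
/-!
On an event `E = e` of positive probability the local latent state `U^i` is almost surely the
constant `φ^i(e_i)`, so the chain rule together with the local Markov and observation hypotheses
gives `P(X'^i=x, Y'^i=y, E=e) = P(X'^i=x | U^i=φ^i(e_i)) P(Y'^i=y | X'^i=x) P(E=e)`
(`local_joint_eq`). The coefficient depends on `e` only through `e_i`. Summing over `x`, and then
over all `e'` with `e'_i = e_i`, identifies both `P(Y'^i=y | E=e)` and `P(Y'^i=y | E_i=e_i)` with
the same mixture. The joint factorization follows by summing the conditional independence
hypothesis over all latent configurations `x` and exchanging the sum with the product.
-/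

open MeasureTheory Finset

/-- Law of total probability over the values of `f`; only the fibers of `f`, not the event `P`,
need to be measurable. -/
lemma toReal_measure_eq_sum_fiber {Ω α : Type*} [MeasurableSpace Ω] (μ : Measure Ω)
    [IsFiniteMeasure μ] [Fintype α] (f : Ω → α) (hf : ∀ a, MeasurableSet {ω | f ω = a})
    (P : Ω → Prop) :
    (μ {ω | P ω}).toReal = ∑ a, (μ {ω | P ω ∧ f ω = a}).toReal := by
  have h := sum_measureReal_preimage_singleton (μ := μ.restrict {ω | P ω}) (f := f)
    (Finset.univ : Finset α) (fun a _ => hf a)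
  have h2 : ∀ a, (μ.restrict {ω | P ω}).real (f ⁻¹' {a}) = (μ {ω | P ω ∧ f ω = a}).toReal := by
    intro a
    rw [measureReal_def, Measure.restrict_apply (show MeasurableSet (f ⁻¹' {a}) from hf a),
      Set.inter_comm]
    rfl
  simp only [h2] at h
  rw [h]
  simp [measureReal_def]

/-- Chain rule for a single subsystem: the event `E = e` fixes `U = u` almost surely, and
`U` and `X` then screen off `E`. It also holds for null events, where both sides vanish. -/
lemma local_joint_eq {Ω ε υ χ η : Type*} [MeasurableSpace Ω] (μ : Measure Ω)
    [IsFiniteMeasure μ] (E : Ω → ε) (U : Ω → υ) (X : Ω → χ) (Y : Ω → η)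
    (e : ε) (u : υ) (x : χ) (y : η) (hrec : ∀ᵐ ω ∂μ, E ω = e → U ω = u)
    (hmarkov : 0 < (μ {ω | U ω = u ∧ E ω = e}).toReal →
      cpr μ X (fun ω => (U ω, E ω)) x (u, e) = cpr μ X U x u)
    (hobs : 0 < (μ {ω | X ω = x ∧ U ω = u ∧ E ω = e}).toReal →
      cpr μ Y (fun ω => (X ω, U ω, E ω)) y (x, u, e) = cpr μ Y X y x) :
    (μ {ω | (X ω = x ∧ Y ω = y) ∧ E ω = e}).toReal =
      cpr μ X U x u * cpr μ Y X y x * (μ {ω | E ω = e}).toReal := by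
  have hE : μ {ω | U ω = u ∧ E ω = e} = μ {ω | E ω = e} := by
    apply measure_congr
    filter_upwards [hrec] with ω h
    exact propext ⟨fun h' => h'.2, fun h' => ⟨h h', h'⟩⟩
  have hXYE : μ {ω | (X ω = x ∧ Y ω = y) ∧ E ω = e} =
      μ {ω | Y ω = y ∧ X ω = x ∧ U ω = u ∧ E ω = e} := by
    apply measure_congr
    filter_upwards [hrec] with ω h
    exact propext ⟨fun h' => ⟨h'.1.2, h'.1.1, h h'.2, h'.2⟩,
      fun h' => ⟨⟨h'.2.1, h'.1⟩, h'.2.2.2⟩⟩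
  rw [← hE, hXYE]
  have hle1 : (μ {ω | X ω = x ∧ U ω = u ∧ E ω = e}).toReal ≤
      (μ {ω | U ω = u ∧ E ω = e}).toReal :=
    measureReal_mono (μ := μ) fun ω h => h.2
  have hle2 : (μ {ω | Y ω = y ∧ X ω = x ∧ U ω = u ∧ E ω = e}).toReal ≤
      (μ {ω | X ω = x ∧ U ω = u ∧ E ω = e}).toReal :=
    measureReal_mono (μ := μ) fun ω h => h.2
  have h0 : 0 ≤ (μ {ω | Y ω = y ∧ X ω = x ∧ U ω = u ∧ E ω = e}).toReal :=
    ENNReal.toReal_nonneg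
  simp only [cpr, Prod.mk.injEq] at hmarkov hobs
  rcases (h0.trans (hle2.trans hle1)).eq_or_lt with hz | hpos
  · rw [← hz] at hle1 ⊢
    rw [mul_zero]
    linarith
  have hm := (div_eq_iff hpos.ne').1 (hmarkov hpos)
  rcases (h0.trans hle2).eq_or_lt with hz | hposX
  · have hc : cpr μ X U x u = 0 := by
      rw [← hz] at hm
      exact (mul_eq_zero.1 hm.symm).resolve_right hpos.ne'
    -- With this factor zero, the value of `P(Y = y | X = x)` is immaterial.
    rw [hc]
    linarith
  · have ho := (div_eq_iff hposX.ne').1 (hobs hposX)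
    rw [ho, hm]
    simp only [cpr]
    ring

/-- **Probabilistic core of Lemma 1 (factorization of the observed conditional over
subsystems).** Under exact local reconstruction `U^i = φ^i(E_i)` a.s., local Markov
dynamics, local observation property, and mutual conditional independence of the pairs
`(X'^i, Y'^i)` given `E`, the observed conditional factorizes over subsystems:
`P(Y'^1=y_1, …, Y'^M=y_M | E=e) = ∏ i, P(Y'^i=y_i | E_i=e_i)`, and each factor satisfies
`P(Y'^i=y_i | E_i=e_i) = ∑ x', P(X'^i=x' | U^i=φ^i(e_i)) · P(Y'^i=y_i | X'^i=x')`. -/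
theorem observed_conditional_factorizes
    {Ω : Type*} [MeasurableSpace Ω] (μ : Measure Ω) [IsProbabilityMeasure μ]
    {M : ℕ} (hM : 1 ≤ M)
    (Et Ut Xt Yt : Fin M → Type*)
    [∀ i, Fintype (Et i)] [∀ i, Nonempty (Et i)]
    [∀ i, Fintype (Ut i)] [∀ i, Nonempty (Ut i)]
    [∀ i, Fintype (Xt i)] [∀ i, Nonempty (Xt i)]
    [∀ i, Fintype (Yt i)] [∀ i, Nonempty (Yt i)]
    (Ev : ∀ i, Ω → Et i) (Uv : ∀ i, Ω → Ut i)
    (Xv : ∀ i, Ω → Xt i) (Yv : ∀ i, Ω → Yt i)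
    (hEm : ∀ i (a : Et i), MeasurableSet {ω | Ev i ω = a})
    (hUm : ∀ i (u : Ut i), MeasurableSet {ω | Uv i ω = u})
    (hXm : ∀ i (x : Xt i), MeasurableSet {ω | Xv i ω = x})
    (hYm : ∀ i (y : Yt i), MeasurableSet {ω | Yv i ω = y})
    (φ : ∀ i, Et i → Ut i)
    (hrec : ∀ i, ∀ᵐ ω ∂μ, Uv i ω = φ i (Ev i ω))
    (hmarkov : ∀ i (x : Xt i) (u : Ut i) (e : ∀ j, Et j),
      0 < (μ {ω | Uv i ω = u ∧ (fun j => Ev j ω) = e}).toReal →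
      cpr μ (Xv i) (fun ω => (Uv i ω, fun j : Fin M => Ev j ω)) x (u, e) =
        cpr μ (Xv i) (Uv i) x u)
    (hobs : ∀ i (y : Yt i) (x : Xt i) (u : Ut i) (e : ∀ j, Et j),
      0 < (μ {ω | Xv i ω = x ∧ Uv i ω = u ∧ (fun j => Ev j ω) = e}).toReal →
      cpr μ (Yv i) (fun ω => (Xv i ω, Uv i ω, fun j : Fin M => Ev j ω)) y (x, u, e) =
        cpr μ (Yv i) (Xv i) y x)
    (hind : ∀ (e : ∀ j, Et j), 0 < (μ {ω | (fun j => Ev j ω) = e}).toReal →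
      ∀ (x : ∀ i, Xt i) (y : ∀ i, Yt i),
        cpr μ (fun ω (i : Fin M) => (Xv i ω, Yv i ω)) (fun ω (j : Fin M) => Ev j ω)
            (fun i => (x i, y i)) e =
          ∏ i, cpr μ (fun ω => (Xv i ω, Yv i ω)) (fun ω (j : Fin M) => Ev j ω)
            (x i, y i) e) :
    ∀ (e : ∀ j, Et j), 0 < (μ {ω | (fun j => Ev j ω) = e}).toReal →
      ∀ y : ∀ i, Yt i,
        (cpr μ (fun ω (i : Fin M) => Yv i ω) (fun ω (j : Fin M) => Ev j ω) y e =
          ∏ i, cpr μ (Yv i) (Ev i) (y i) (e i)) ∧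
        (∀ i, cpr μ (Yv i) (Ev i) (y i) (e i) =
          ∑ x : Xt i, cpr μ (Xv i) (Uv i) x (φ i (e i)) * cpr μ (Yv i) (Xv i) (y i) x) := by
  have hEfm : ∀ e : ∀ j, Et j, MeasurableSet {ω | (fun j => Ev j ω) = e} := by
    intro e
    have : {ω | (fun j => Ev j ω) = e} = ⋂ j, {ω | Ev j ω = e j} := by
      ext ω
      simp [funext_iff]
    rw [this]
    exact MeasurableSet.iInter fun j => hEm j (e j)
  have hXfm : ∀ x : ∀ j, Xt j, MeasurableSet {ω | (fun j => Xv j ω) = x} := by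
    intro x
    have : {ω | (fun j => Xv j ω) = x} = ⋂ j, {ω | Xv j ω = x j} := by
      ext ω
      simp [funext_iff]
    rw [this]
    exact MeasurableSet.iInter fun j => hXm j (x j)
  have hjoint : ∀ i (e : ∀ j, Et j) (x : Xt i) (y : Yt i),
      (μ {ω | (Xv i ω = x ∧ Yv i ω = y) ∧ (fun j => Ev j ω) = e}).toReal =
        cpr μ (Xv i) (Uv i) x (φ i (e i)) * cpr μ (Yv i) (Xv i) y x *
          (μ {ω | (fun j => Ev j ω) = e}).toReal := by
    intro i e x y
    refine local_joint_eq μ (fun ω j => Ev j ω) (Uv i) (Xv i) (Yv i) e (φ i (e i)) x y ?_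
      (hmarkov i x _ e) (hobs i y x _ e)
    filter_upwards [hrec i] with ω h he
    rw [h, ← he]
  have hmarg : ∀ i (e : ∀ j, Et j) (y : Yt i),
      (μ {ω | Yv i ω = y ∧ (fun j => Ev j ω) = e}).toReal =
        (∑ x : Xt i, cpr μ (Xv i) (Uv i) x (φ i (e i)) * cpr μ (Yv i) (Xv i) y x) *
          (μ {ω | (fun j => Ev j ω) = e}).toReal := by
    intro i e y
    rw [toReal_measure_eq_sum_fiber μ (Xv i) (hXm i), Finset.sum_mul]
    refine Finset.sum_congr rfl fun x _ => ?_
    rw [← hjoint]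
    congr 2
    ext ω
    simp only [Set.mem_ofPred_eq]
    tauto
  intro e he y
  have hlocal : ∀ i, cpr μ (Yv i) (Ev i) (y i) (e i) =
      ∑ x : Xt i, cpr μ (Xv i) (Uv i) x (φ i (e i)) * cpr μ (Yv i) (Xv i) (y i) x := by
    intro i
    have hpos : 0 < (μ {ω | Ev i ω = e i}).toReal :=
      he.trans_le (measureReal_mono (μ := μ) fun ω h => congrFun h i)
    unfold cpr
    rw [div_eq_iff hpos.ne', toReal_measure_eq_sum_fiber μ (fun ω j => Ev j ω) hEfm,
      toReal_measure_eq_sum_fiber μ (fun ω j => Ev j ω) hEfm (fun ω => Ev i ω = e i),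
      Finset.mul_sum]
    refine Finset.sum_congr rfl fun e' _ => ?_
    by_cases h : e' i = e i
    · have h1 : {ω | (Yv i ω = y i ∧ Ev i ω = e i) ∧ (fun j => Ev j ω) = e'} =
          {ω | Yv i ω = y i ∧ (fun j => Ev j ω) = e'} := by
        ext ω
        exact ⟨fun h' => ⟨h'.1.1, h'.2⟩, fun h' => ⟨⟨h'.1, (congrFun h'.2 i).trans h⟩, h'.2⟩⟩
      have h2 : {ω | Ev i ω = e i ∧ (fun j => Ev j ω) = e'} =
          {ω | (fun j => Ev j ω) = e'} := by
        ext ω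
        exact ⟨fun h' => h'.2, fun h' => ⟨(congrFun h' i).trans h, h'⟩⟩
      rw [h1, h2, hmarg, h]
      rfl
    · have h1 : {ω | (Yv i ω = y i ∧ Ev i ω = e i) ∧ (fun j => Ev j ω) = e'} = ∅ := by
        ext ω
        exact ⟨fun h' => h ((congrFun h'.2 i).symm.trans h'.1.2), fun h' => h'.elim⟩
      have h2 : {ω | Ev i ω = e i ∧ (fun j => Ev j ω) = e'} = ∅ := by
        ext ω
        exact ⟨fun h' => h ((congrFun h'.2 i).symm.trans h'.1), fun h' => h'.elim⟩
      rw [h1, h2]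
      simp
  refine ⟨?_, hlocal⟩
  have hpair : ∀ i (x : Xt i), cpr μ (fun ω => (Xv i ω, Yv i ω)) (fun ω (j : Fin M) => Ev j ω)
      (x, y i) e = cpr μ (Xv i) (Uv i) x (φ i (e i)) * cpr μ (Yv i) (Xv i) (y i) x := by
    intro i x
    rw [cpr, div_eq_iff he.ne', ← hjoint]
    simp only [Prod.mk.injEq]
  have hsum : cpr μ (fun ω (i : Fin M) => Yv i ω) (fun ω (j : Fin M) => Ev j ω) y e =
      ∑ x : ∀ i, Xt i, cpr μ (fun ω (i : Fin M) => (Xv i ω, Yv i ω))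
        (fun ω (j : Fin M) => Ev j ω) (fun i => (x i, y i)) e := by
    unfold cpr
    rw [← Finset.sum_div, toReal_measure_eq_sum_fiber μ (fun ω j => Xv j ω) hXfm]
    congr 1
    refine Finset.sum_congr rfl fun x _ => ?_
    congr 2
    ext ω
    simp only [Set.mem_ofPred_eq, funext_iff, Prod.mk.injEq, forall_and]
    tauto
  rw [hsum]
  simp only [hind e he, hpair, hlocal]
  rw [Finset.prod_univ_sum, Fintype.piFinset_univ]
end
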